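/- Let N ≥ 1 and 1 ≤ r ≤ ∞. There exists a constant c* > 0, depending only on N and r, such that for every ρ > 0 and every nonnegative measurable function φ on ℝ^N with |||φ|||_{r,ρ} < ∞, one has ‖S(t)φ‖_{L^∞(ℝ^N)} ≤ c* t^{−N/(2r)} |||φ|||_{r,ρ} for all 0 < t ≤ ρ². -/

import Mathlib

open MeasureTheory ENNReal Filter

noncomputable section

/-- Euclidean space `ℝ^N`. -/
abbrev Euc (N : ℕ) := EuclideanSpace ℝ (Fin N)

/-- The heat semigroup applied to a (nonnegative) function `φ` on `ℝ^N`, with values in `[0,∞]`: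
`[S(t)φ](x) = ∫ (4πt)^{-N/2} exp(-|x-y|²/(4t)) φ(y) dy`. -/
noncomputable def heatS (N : ℕ) (t : ℝ) (φ : Euc N → ℝ) (x : Euc N) : ℝ≥0∞ :=
  ∫⁻ y, ENNReal.ofReal
    ((4 * Real.pi * t) ^ (-(N : ℝ) / 2) * Real.exp (-‖x - y‖ ^ 2 / (4 * t)) * φ y)

/-- The `L^∞` norm of `S(t)φ` on `ℝ^N`. -/
noncomputable def heatSup (N : ℕ) (t : ℝ) (φ : Euc N → ℝ) : ℝ≥0∞ :=
  essSup (heatS N t φ) volume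

/-- The `L^{r,∞}(E)` quasinorm: for `1 < r < ∞` it is
`sup_{λ>0} λ |{x ∈ E : |f x| > λ}|^{1/r}`; for `r = 1` (resp. `r = ∞`)
it is the usual `L¹(E)` (resp. `L^∞(E)`) norm. -/
noncomputable def wnorm (N : ℕ) (r : ℝ≥0∞) (f : Euc N → ℝ) (E : Set (Euc N)) : ℝ≥0∞ :=
  if r = 1 then ∫⁻ x in E, ENNReal.ofReal |f x|
  else if r = ⊤ then essSup (fun x => ENNReal.ofReal |f x|) (volume.restrict E)
  else ⨆ (l : ℝ) (_ : 0 < l), ENNReal.ofReal l * (volume {x ∈ E | l < |f x|}) ^ (1 / r.toReal)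

/-- The uniformly local quasinorm `|||f|||_{r,ρ} = sup_x ‖f‖_{L^{r,∞}(B(x,ρ))}`
(for `r = ∞` it is the `L^∞(ℝ^N)` norm). -/
noncomputable def ulocNorm (N : ℕ) (r : ℝ≥0∞) (ρ : ℝ) (f : Euc N → ℝ) : ℝ≥0∞ :=
  if r = ⊤ then essSup (fun x => ENNReal.ofReal |f x|) volume
  else ⨆ x : Euc N, wnorm N r f (Metric.ball x ρ)

/-- `u ∈ L^∞(τ, T-τ; L^∞(ℝ^N))` for every `τ ∈ (0, T/2)`. -/
def LocBdd (N : ℕ) (T : ℝ≥0∞) (u : Euc N → ℝ → ℝ) : Prop :=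
  ∀ τ : ℝ, 0 < τ → ENNReal.ofReal (2 * τ) < T →
    ∃ M : ℝ, ∀ t : ℝ, τ ≤ t → ENNReal.ofReal (t + τ) ≤ T →
      ∀ᵐ x ∂(volume : Measure (Euc N)), |u x t| ≤ M

/-- Regularity requirements on a pair `(u,v)`: nonnegativity, joint measurability and
uniform boundedness away from `t = 0` and `t = T`. -/
def PairRegular (N : ℕ) (T : ℝ≥0∞) (u v : Euc N → ℝ → ℝ) : Prop :=
  (∀ x t, 0 ≤ u x t) ∧ (∀ x t, 0 ≤ v x t) ∧
  Measurable (Function.uncurry u) ∧ Measurable (Function.uncurry v) ∧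
  LocBdd N T u ∧ LocBdd N T v

/-- The Duhamel identities for the system (S) `∂ₜu = Δu + v^p`, `∂ₜv = Δv + u^q` at time `t`. -/
def DuhamelSys (N : ℕ) (p q : ℝ) (u₀ v₀ : Euc N → ℝ) (u v : Euc N → ℝ → ℝ) (t : ℝ) : Prop :=
  (∀ᵐ x ∂(volume : Measure (Euc N)), ENNReal.ofReal (u x t) =
      heatS N t u₀ x + ∫⁻ s in Set.Ioo 0 t, heatS N (t - s) (fun y => v y s ^ p) x) ∧
  (∀ᵐ x ∂(volume : Measure (Euc N)), ENNReal.ofReal (v x t) =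
      heatS N t v₀ x + ∫⁻ s in Set.Ioo 0 t, heatS N (t - s) (fun y => u y s ^ q) x)

/-- The Duhamel inequalities (`≥`, with finite left-hand side) for the system (S) at time `t`. -/
def DuhamelSuperSys (N : ℕ) (p q : ℝ) (u₀ v₀ : Euc N → ℝ) (u v : Euc N → ℝ → ℝ) (t : ℝ) : Prop :=
  (∀ᵐ x ∂(volume : Measure (Euc N)),
      heatS N t u₀ x + (∫⁻ s in Set.Ioo 0 t, heatS N (t - s) (fun y => v y s ^ p) x) ≤
        ENNReal.ofReal (u x t)) ∧
  (∀ᵐ x ∂(volume : Measure (Euc N)),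
      heatS N t v₀ x + (∫⁻ s in Set.Ioo 0 t, heatS N (t - s) (fun y => u y s ^ q) x) ≤
        ENNReal.ofReal (v x t))

/-- `(u,v)` is a solution of the system (S) on `ℝ^N × (0,T)`. -/
def IsSolSys (N : ℕ) (p q : ℝ) (u₀ v₀ : Euc N → ℝ) (T : ℝ≥0∞) (u v : Euc N → ℝ → ℝ) : Prop :=
  PairRegular N T u v ∧
  ∀ t : ℝ, 0 < t → ENNReal.ofReal t < T → DuhamelSys N p q u₀ v₀ u v t

/-- `(u,v)` is a supersolution of the system (S) on `ℝ^N × (0,T)`. -/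
def IsSuperSys (N : ℕ) (p q : ℝ) (u₀ v₀ : Euc N → ℝ) (T : ℝ≥0∞) (u v : Euc N → ℝ → ℝ) : Prop :=
  PairRegular N T u v ∧
  ∀ t : ℝ, 0 < t → ENNReal.ofReal t < T → DuhamelSuperSys N p q u₀ v₀ u v t

/-- `(u,v)` is the minimal solution of the system (S) on `ℝ^N × (0,T)`. -/
def IsMinSolSys (N : ℕ) (p q : ℝ) (u₀ v₀ : Euc N → ℝ) (T : ℝ≥0∞)
    (u v : Euc N → ℝ → ℝ) : Prop :=
  IsSolSys N p q u₀ v₀ T u v ∧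
  ∀ u' v' : Euc N → ℝ → ℝ, IsSolSys N p q u₀ v₀ T u' v' →
    ∀ t : ℝ, 0 < t → ENNReal.ofReal t < T →
      (∀ᵐ x ∂(volume : Measure (Euc N)), u x t ≤ u' x t) ∧
      (∀ᵐ x ∂(volume : Measure (Euc N)), v x t ≤ v' x t)

/-- Regularity requirements on a scalar function `w`. -/
def ScalarRegular (N : ℕ) (T : ℝ≥0∞) (w : Euc N → ℝ → ℝ) : Prop :=
  (∀ x t, 0 ≤ w x t) ∧ Measurable (Function.uncurry w) ∧ LocBdd N T w

/-- The Duhamel identity for the scalar problem (E) `∂ₜw = Δw + α w^A + β w^B` at time `t`. -/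
def DuhamelScalar (N : ℕ) (α β A B : ℝ) (w₀ : Euc N → ℝ) (w : Euc N → ℝ → ℝ) (t : ℝ) : Prop :=
  ∀ᵐ x ∂(volume : Measure (Euc N)), ENNReal.ofReal (w x t) =
    heatS N t w₀ x +
      ∫⁻ s in Set.Ioo 0 t, heatS N (t - s) (fun y => α * w y s ^ A + β * w y s ^ B) x

/-- The Duhamel inequality (`≥`, with finite left-hand side) for the scalar problem (E). -/
def DuhamelSuperScalar (N : ℕ) (α β A B : ℝ) (w₀ : Euc N → ℝ) (w : Euc N → ℝ → ℝ)
    (t : ℝ) : Prop :=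
  ∀ᵐ x ∂(volume : Measure (Euc N)),
    heatS N t w₀ x +
        (∫⁻ s in Set.Ioo 0 t, heatS N (t - s) (fun y => α * w y s ^ A + β * w y s ^ B) x) ≤
      ENNReal.ofReal (w x t)

/-- `w` is a solution of the scalar problem (E) on `ℝ^N × (0,T)`. -/
def IsSolScalar (N : ℕ) (α β A B : ℝ) (w₀ : Euc N → ℝ) (T : ℝ≥0∞)
    (w : Euc N → ℝ → ℝ) : Prop :=
  ScalarRegular N T w ∧
  ∀ t : ℝ, 0 < t → ENNReal.ofReal t < T → DuhamelScalar N α β A B w₀ w t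

/-- `w` is a supersolution of the scalar problem (E) on `ℝ^N × (0,T)`. -/
def IsSuperScalar (N : ℕ) (α β A B : ℝ) (w₀ : Euc N → ℝ) (T : ℝ≥0∞)
    (w : Euc N → ℝ → ℝ) : Prop :=
  ScalarRegular N T w ∧
  ∀ t : ℝ, 0 < t → ENNReal.ofReal t < T → DuhamelSuperScalar N α β A B w₀ w t

/-- The Duhamel identities for the strongly coupled system (SC)
`∂ₜu = Δu + u^{p₁} v^{p₂}`, `∂ₜv = Δv + u^{q₁} v^{q₂}` at time `t`. -/
def DuhamelSC (N : ℕ) (p₁ p₂ q₁ q₂ : ℝ) (u₀ v₀ : Euc N → ℝ) (u v : Euc N → ℝ → ℝ)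
    (t : ℝ) : Prop :=
  (∀ᵐ x ∂(volume : Measure (Euc N)), ENNReal.ofReal (u x t) =
      heatS N t u₀ x +
        ∫⁻ s in Set.Ioo 0 t, heatS N (t - s) (fun y => u y s ^ p₁ * v y s ^ p₂) x) ∧
  (∀ᵐ x ∂(volume : Measure (Euc N)), ENNReal.ofReal (v x t) =
      heatS N t v₀ x +
        ∫⁻ s in Set.Ioo 0 t, heatS N (t - s) (fun y => u y s ^ q₁ * v y s ^ q₂) x)

/-- `(u,v)` is a solution of the strongly coupled system (SC) on `ℝ^N × (0,T)`. -/
def IsSolSC (N : ℕ) (p₁ p₂ q₁ q₂ : ℝ) (u₀ v₀ : Euc N → ℝ) (T : ℝ≥0∞)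
    (u v : Euc N → ℝ → ℝ) : Prop :=
  PairRegular N T u v ∧
  ∀ t : ℝ, 0 < t → ENNReal.ofReal t < T → DuhamelSC N p₁ p₂ q₁ q₂ u₀ v₀ u v t

/-!
Fix `x` and compare the heat kernel at time `t` with the one at time `2t`: since
`|x - z|² ≤ 2 |x - y|² + 2t` whenever `|y - z| < √t`, moving `y` to `z` costs only the factor
`e^{1/4} 2^{N/2}` once the time is doubled. Averaging over `z ∈ B(y, √t)` and exchanging the
integrals, `|B(0, √t)| [S(t)φ](x)` is at most `e^{1/4} 2^{N/2}` times the supremum over `z` of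
`∫_{B(z, √t)} |φ|`. As `√t ≤ ρ`, the embedding of `L^{r,∞}` into `L¹` on sets of finite measure
bounds these integrals by a multiple of `|B(0, √t)|^{1 - 1/r} |||φ|||_{r,ρ}`, and `|B(0, √t)|` is
proportional to `t^{N/2}`.
-/

section WeakNorm

variable {α : Type*} [MeasurableSpace α] {μ : Measure α} {f : α → ℝ} {p : ℝ}

/-- The weak `L^p` quasinorm `sup_{l > 0} l μ{|f| > l}^{1/p}` of a real function, for a general
measure; on `volume.restrict E` it is the branch `1 < r < ∞` of `wnorm`. -/
def weakNorm (μ : Measure α) (p : ℝ) (f : α → ℝ) : ℝ≥0∞ :=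
  ⨆ (l : ℝ) (_ : 0 < l), ENNReal.ofReal l * μ {x | l < |f x|} ^ (1 / p)

theorem measure_lt_abs_le_weakNorm_div_rpow (hp : 0 < p) {l : ℝ} (hl : 0 < l) :
    μ {x | l < |f x|} ≤ (weakNorm μ p f / ENNReal.ofReal l) ^ p := by
  rw [← ENNReal.rpow_inv_le_iff hp, ← one_div,
    ENNReal.le_div_iff_mul_le (.inl (by simpa using hl)) (.inl ofReal_ne_top), mul_comm]
  exact le_iSup₂ (f := fun (l : ℝ) (_ : 0 < l) => ENNReal.ofReal l * μ {x | l < |f x|} ^ (1 / p))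
    l hl

theorem lintegral_Ioi_div_ofReal_rpow (hp : 1 < p) (K : ℝ≥0∞) {l : ℝ} (hl : 0 < l) :
    ∫⁻ a in Set.Ioi l, (K / ENNReal.ofReal a) ^ p =
      K ^ p * ENNReal.ofReal (l ^ (1 - p) / (p - 1)) := by
  have h_integrand : ∀ a ∈ Set.Ioi l,
      (K / ENNReal.ofReal a) ^ p = K ^ p * ENNReal.ofReal (a ^ (-p)) := by
    intro a ha
    have ha : 0 < a := hl.trans ha
    rw [div_eq_mul_inv, ENNReal.mul_rpow_of_nonneg _ _ (by linarith), ← ENNReal.rpow_neg_one,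
      ← ENNReal.rpow_mul, ENNReal.ofReal_rpow_of_pos ha, neg_one_mul]
  have h_nonneg : 0 ≤ᵐ[volume.restrict (Set.Ioi l)] fun a : ℝ => a ^ (-p) :=
    (ae_restrict_iff' measurableSet_Ioi).2 <|
      ae_of_all _ fun a ha => Real.rpow_nonneg (hl.trans ha).le _
  rw [setLIntegral_congr_fun measurableSet_Ioi h_integrand, lintegral_const_mul _ (by fun_prop),
    ← ofReal_integral_eq_lintegral_ofReal (integrableOn_Ioi_rpow_of_lt (by linarith) hl) h_nonneg,
    integral_Ioi_rpow_of_lt (by linarith) hl, ← neg_div_neg_eq, neg_neg,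
    show -(-p + 1) = p - 1 by ring, neg_add_eq_sub]

theorem lintegral_abs_eq_lintegral_measure_lt (hf : AEMeasurable f μ) :
    ∫⁻ x, ENNReal.ofReal |f x| ∂μ = ∫⁻ l in Set.Ioi 0, μ {x | l < |f x|} :=
  lintegral_eq_lintegral_meas_lt μ (ae_of_all _ fun _ => abs_nonneg _) hf.abs

theorem lintegral_abs_eq_zero_of_weakNorm_eq_zero (hf : AEMeasurable f μ) (hp : 0 < p)
    (h : weakNorm μ p f = 0) : ∫⁻ x, ENNReal.ofReal |f x| ∂μ = 0 := by
  rw [lintegral_abs_eq_lintegral_measure_lt hf]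
  refine setLIntegral_eq_zero measurableSet_Ioi fun l hl => ?_
  simpa [h, hp] using measure_lt_abs_le_weakNorm_div_rpow (μ := μ) (f := f) hp hl

theorem lintegral_abs_le_measure_mul_add (hf : AEMeasurable f μ) (hp : 1 < p) {l : ℝ}
    (hl : 0 < l) :
    ∫⁻ x, ENNReal.ofReal |f x| ∂μ ≤ μ Set.univ * ENNReal.ofReal l +
      weakNorm μ p f ^ p * ENNReal.ofReal (l ^ (1 - p) / (p - 1)) := by
  rw [lintegral_abs_eq_lintegral_measure_lt hf, ← Set.Ioc_union_Ioi_eq_Ioi hl.le]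
  refine (lintegral_union_le _ _ _).trans (add_le_add ?_ ?_)
  · calc ∫⁻ a in Set.Ioc 0 l, μ {x | a < |f x|}
        ≤ ∫⁻ _ in Set.Ioc 0 l, μ Set.univ := by
          gcongr
          exact Set.subset_univ _
      _ = μ Set.univ * ENNReal.ofReal l := by simp
  · rw [← lintegral_Ioi_div_ofReal_rpow hp _ hl]
    exact setLIntegral_mono' measurableSet_Ioi fun a ha =>
      measure_lt_abs_le_weakNorm_div_rpow (by linarith) (hl.trans ha)

-- `l = K V ^ (-1 / p)` is the height at which `V = (K / l) ^ p`, so that the two bounds on the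
-- distribution function used in `lintegral_abs_le_measure_mul_add` agree.
theorem mul_add_rpow_mul_eq_conjExponent_mul {V K : ℝ} (hV : 0 < V) (hK : 0 < K) (hp : 1 < p) :
    V * (K * V ^ (-1 / p)) + K ^ p * ((K * V ^ (-1 / p)) ^ (1 - p) / (p - 1)) =
      p.conjExponent * V ^ (1 - 1 / p) * K := by
  have hp₀ : p ≠ 0 := by linarith
  have hp₁ : p - 1 ≠ 0 := by linarith
  have hV_mul : V * V ^ (-1 / p) = V ^ (1 - 1 / p) := by
    rw [← Real.rpow_one_add' hV.le] <;> grind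
  have hK_mul : K ^ p * K ^ (1 - p) = K := by
    rw [← Real.rpow_add hK, add_sub_cancel, Real.rpow_one]
  have hV_rpow : (V ^ (-1 / p)) ^ (1 - p) = V ^ (1 - 1 / p) := by
    rw [← Real.rpow_mul hV.le]
    congr 1
    field_simp
    ring
  calc V * (K * V ^ (-1 / p)) + K ^ p * ((K * V ^ (-1 / p)) ^ (1 - p) / (p - 1))
      = V * V ^ (-1 / p) * K + K ^ p * K ^ (1 - p) * (V ^ (-1 / p)) ^ (1 - p) / (p - 1) := by
        rw [Real.mul_rpow hK.le (by positivity)]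
        ring
    _ = p.conjExponent * V ^ (1 - 1 / p) * K := by
        rw [hV_mul, hK_mul, hV_rpow, Real.conjExponent]
        field_simp
        ring

theorem lintegral_abs_le_weakNorm (hf : AEMeasurable f μ) (hp : 1 < p) :
    ∫⁻ x, ENNReal.ofReal |f x| ∂μ ≤
      ENNReal.ofReal p.conjExponent * μ Set.univ ^ (1 - 1 / p) * weakNorm μ p f := by
  have hp_conj : 0 < p.conjExponent := div_pos (by linarith) (by linarith)
  have hp_exp : 0 < 1 - 1 / p := by
    rw [sub_pos, div_lt_one (by linarith)]
    exact hp
  rcases eq_or_ne (weakNorm μ p f) 0 with hK₀ | hK₀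
  · exact (lintegral_abs_eq_zero_of_weakNorm_eq_zero hf (by linarith) hK₀).trans_le zero_le
  rcases eq_or_ne (μ Set.univ) 0 with hV₀ | hV₀
  · simp [Measure.measure_univ_eq_zero.1 hV₀]
  rcases eq_or_ne (μ Set.univ) ⊤ with hV | hV
  · rw [hV, top_rpow_of_pos hp_exp]
    simp [hp_conj, hK₀]
  rcases eq_or_ne (weakNorm μ p f) ⊤ with hK | hK
  · simp [hK, hp_conj, hV₀, hV]
  obtain ⟨V, hV_pos, hV_eq⟩ : ∃ V : ℝ, 0 < V ∧ μ Set.univ = ENNReal.ofReal V :=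
    ⟨_, toReal_pos hV₀ hV, (ofReal_toReal hV).symm⟩
  obtain ⟨K, hK_pos, hK_eq⟩ : ∃ K : ℝ, 0 < K ∧ weakNorm μ p f = ENNReal.ofReal K :=
    ⟨_, toReal_pos hK₀ hK, (ofReal_toReal hK).symm⟩
  have h_split := lintegral_abs_le_measure_mul_add hf hp (l := K * V ^ (-1 / p)) (by positivity)
  have hp_sub : 0 < p - 1 := by linarith
  rwa [hV_eq, hK_eq, ofReal_rpow_of_pos hK_pos, ← ofReal_mul (by positivity),
    ← ofReal_mul (by positivity), ← ofReal_add (by positivity) (by positivity),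
    mul_add_rpow_mul_eq_conjExponent_mul hV_pos hK_pos hp, ofReal_mul (by positivity),
    ofReal_mul (by positivity), ← ofReal_rpow_of_pos hV_pos, ← hV_eq, ← hK_eq] at h_split

end WeakNorm

section UniformlyLocalNorm

variable {N : ℕ} {r : ℝ≥0∞} {f : Euc N → ℝ} {E : Set (Euc N)}

/-- The constant in the embedding `L^{r,∞}(E) ⊂ L¹(E)` on sets `E` of finite measure: the conjugate
exponent `r / (r - 1)` for `1 < r < ∞`, and `1` at the endpoints, where `wnorm` is a strong norm. -/
def weakEmbeddingConst (r : ℝ≥0∞) : ℝ :=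
  if r = 1 ∨ r = ⊤ then 1 else r.toReal.conjExponent

theorem one_lt_toReal {r : ℝ≥0∞} (hr : 1 < r) (hr_top : r ≠ ⊤) : 1 < r.toReal := by
  simpa using (toReal_lt_toReal one_ne_top hr_top).2 hr

theorem weakEmbeddingConst_pos (hr : 1 ≤ r) : 0 < weakEmbeddingConst r := by
  unfold weakEmbeddingConst
  split_ifs with h
  · exact one_pos
  · have := one_lt_toReal (lt_of_le_of_ne' hr fun h₁ => h (.inl h₁)) fun h_top => h (.inr h_top)
    exact div_pos (by linarith) (by linarith)

theorem wnorm_eq_weakNorm (hr_one : r ≠ 1) (hr_top : r ≠ ⊤)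
    (hf : AEMeasurable f (volume.restrict E)) :
    wnorm N r f E = weakNorm (volume.restrict E) r.toReal f := by
  have h_superlevel (l : ℝ) :
      volume {x ∈ E | l < |f x|} = volume.restrict E {x | l < |f x|} := by
    rw [Measure.restrict_apply₀ (nullMeasurableSet_lt aemeasurable_const hf.abs), Set.inter_comm]
    rfl
  simp only [wnorm, if_neg hr_one, if_neg hr_top, weakNorm, h_superlevel]

-- At `r = ⊤` the junk values `⊤.toReal = 0` and `1 / 0 = 0` give the exponent `1` of `volume E`.
theorem setLIntegral_abs_le_wnorm (hr : 1 ≤ r) (hf : AEMeasurable f (volume.restrict E)) :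
    ∫⁻ x in E, ENNReal.ofReal |f x| ≤
      ENNReal.ofReal (weakEmbeddingConst r) * volume E ^ (1 - 1 / r.toReal) * wnorm N r f E := by
  rcases eq_or_ne r 1 with rfl | hr_one
  · simp [weakEmbeddingConst, wnorm]
  rcases eq_or_ne r ⊤ with rfl | hr_top
  · calc ∫⁻ x in E, ENNReal.ofReal |f x|
        ≤ ∫⁻ _ in E, wnorm N ⊤ f E := by
          rw [wnorm, if_neg top_ne_one, if_pos rfl]
          exact lintegral_mono_ae (ENNReal.ae_le_essSup _)
      _ = ENNReal.ofReal (weakEmbeddingConst ⊤) * volume E ^ (1 - 1 / (⊤ : ℝ≥0∞).toReal) *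
            wnorm N ⊤ f E := by simp [weakEmbeddingConst, mul_comm]
  · rw [wnorm_eq_weakNorm hr_one hr_top hf, weakEmbeddingConst,
      if_neg (not_or.2 ⟨hr_one, hr_top⟩), ← Measure.restrict_apply_univ E]
    exact lintegral_abs_le_weakNorm hf (one_lt_toReal (lt_of_le_of_ne' hr hr_one) hr_top)

theorem wnorm_mono {F : Set (Euc N)} (hEF : E ⊆ F) : wnorm N r f E ≤ wnorm N r f F := by
  unfold wnorm
  split_ifs
  · exact lintegral_mono_set hEF
  · exact essSup_mono_measure (Measure.restrict_mono_set _ hEF).absolutelyContinuous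
  · gcongr

theorem wnorm_ball_le_ulocNorm {s ρ : ℝ} (hsρ : s ≤ ρ) (z : Euc N) :
    wnorm N r f (Metric.ball z s) ≤ ulocNorm N r ρ f := by
  rcases eq_or_ne r ⊤ with rfl | hr_top
  · simpa [wnorm, ulocNorm] using essSup_mono_measure Measure.restrict_le_self.absolutelyContinuous
  · rw [ulocNorm, if_neg hr_top]
    exact (wnorm_mono (Metric.ball_subset_ball hsρ)).trans
      (le_iSup (fun z => wnorm N r f (Metric.ball z ρ)) z)

theorem setLIntegral_ball_abs_le_ulocNorm (hr : 1 ≤ r) (hf : AEMeasurable f) {s ρ : ℝ}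
    (hsρ : s ≤ ρ) (z : Euc N) :
    ∫⁻ y in Metric.ball z s, ENNReal.ofReal |f y| ≤
      ENNReal.ofReal (weakEmbeddingConst r) *
        volume (Metric.ball (0 : Euc N) s) ^ (1 - 1 / r.toReal) * ulocNorm N r ρ f := by
  rw [← Measure.addHaar_ball_center volume z]
  refine (setLIntegral_abs_le_wnorm hr hf.restrict).trans ?_
  gcongr
  exact wnorm_ball_le_ulocNorm hsρ z

end UniformlyLocalNorm

section BallAveraging

variable {X : Type*} [PseudoMetricSpace X] [SecondCountableTopology X] [MeasurableSpace X]
  [OpensMeasurableSpace X] {μ : Measure X} [SFinite μ]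

theorem lintegral_setLIntegral_ball_swap {F : X → X → ℝ≥0∞}
    (hF : AEMeasurable (Function.uncurry F) (μ.prod μ)) (s : ℝ) :
    ∫⁻ y, ∫⁻ z in Metric.ball y s, F y z ∂μ ∂μ = ∫⁻ z, ∫⁻ y in Metric.ball z s, F y z ∂μ ∂μ := by
  have h_near : MeasurableSet {q : X × X | dist q.1 q.2 < s} :=
    (isOpen_lt continuous_dist continuous_const).measurableSet
  have h_swap := lintegral_lintegral_swap (f := fun y z =>
    {q : X × X | dist q.1 q.2 < s}.indicator (Function.uncurry F) (y, z)) (hF.indicator h_near)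
  simp only [← lintegral_indicator Metric.isOpen_ball.measurableSet]
  simpa only [Set.indicator, Set.mem_ofPred_eq, Metric.mem_ball, dist_comm,
    Function.uncurry_apply_pair] using h_swap

theorem mul_lintegral_mul_le_of_forall_ball {k G f : X → ℝ≥0∞} {s : ℝ} {V : ℝ≥0∞}
    (hG : AEMeasurable G μ) (hf : AEMeasurable f μ) (hV : ∀ y, V ≤ μ (Metric.ball y s))
    (hkG : ∀ y, ∀ z ∈ Metric.ball y s, k y ≤ G z) :
    V * ∫⁻ y, k y * f y ∂μ ≤ (∫⁻ z, G z ∂μ) * ⨆ z, ∫⁻ y in Metric.ball z s, f y ∂μ := by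
  have h_average (y : X) : V * (k y * f y) ≤ ∫⁻ z in Metric.ball y s, G z * f y ∂μ :=
    calc V * (k y * f y) ≤ k y * f y * μ (Metric.ball y s) := by
          rw [mul_comm]
          gcongr
          exact hV y
      _ = ∫⁻ _ in Metric.ball y s, k y * f y ∂μ := (setLIntegral_const _ _).symm
      _ ≤ ∫⁻ z in Metric.ball y s, G z * f y ∂μ :=
          setLIntegral_mono' Metric.isOpen_ball.measurableSet fun z hz => by
            gcongr
            exact hkG y z hz
  calc V * ∫⁻ y, k y * f y ∂μ
      ≤ ∫⁻ y, V * (k y * f y) ∂μ := lintegral_const_mul_le _ _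
    _ ≤ ∫⁻ y, ∫⁻ z in Metric.ball y s, G z * f y ∂μ ∂μ := lintegral_mono h_average
    _ = ∫⁻ z, ∫⁻ y in Metric.ball z s, G z * f y ∂μ ∂μ :=
        lintegral_setLIntegral_ball_swap (hG.comp_snd.mul hf.comp_fst) s
    _ = ∫⁻ z, G z * ∫⁻ y in Metric.ball z s, f y ∂μ ∂μ :=
        lintegral_congr fun z => lintegral_const_mul'' _ hf.restrict
    _ ≤ ∫⁻ z, G z * ⨆ z, ∫⁻ y in Metric.ball z s, f y ∂μ ∂μ := by
        gcongr with z
        exact le_iSup (fun z => ∫⁻ y in Metric.ball z s, f y ∂μ) z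
    _ = (∫⁻ z, G z ∂μ) * ⨆ z, ∫⁻ y in Metric.ball z s, f y ∂μ := lintegral_mul_const'' _ hG

end BallAveraging

section HeatKernel

variable {E : Type*} [NormedAddCommGroup E] [InnerProductSpace ℝ E]

/-- The Gauss–Weierstrass kernel `(4πt)^{-d/2} exp(-|x|²/(4t))` of a `d`-dimensional Euclidean
space, the kernel in `heatS`. -/
def heatKernel (t : ℝ) (x : E) : ℝ :=
  (4 * Real.pi * t) ^ (-(Module.finrank ℝ E : ℝ) / 2) * Real.exp (-‖x‖ ^ 2 / (4 * t))

variable {t : ℝ}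

theorem heatKernel_nonneg (ht : 0 < t) (x : E) : 0 ≤ heatKernel t x := by
  unfold heatKernel
  positivity

theorem heatKernel_le_heatKernel_two_mul (ht : 0 < t) {x y : E} (hxy : ‖x - y‖ ≤ √t) :
    heatKernel t x ≤
      Real.exp (1 / 4) * 2 ^ ((Module.finrank ℝ E : ℝ) / 2) * heatKernel (2 * t) y := by
  have h_sq : ‖y‖ ^ 2 ≤ 2 * (‖x‖ ^ 2 + t) :=
    calc ‖y‖ ^ 2 ≤ (‖x‖ + ‖x - y‖) ^ 2 := by
          gcongr
          exact norm_le_norm_add_norm_sub' y x |>.trans_eq (by rw [norm_sub_rev])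
      _ ≤ 2 * (‖x‖ ^ 2 + ‖x - y‖ ^ 2) := add_sq_le
      _ ≤ 2 * (‖x‖ ^ 2 + t) := by
          gcongr
          exact (Real.le_sqrt (norm_nonneg _) ht.le).1 hxy
  have h_exponent : -‖x‖ ^ 2 / (4 * t) ≤ 1 / 4 + -‖y‖ ^ 2 / (4 * (2 * t)) := by
    field_simp
    linarith
  have h_const : (4 * Real.pi * t) ^ (-(Module.finrank ℝ E : ℝ) / 2) =
      2 ^ ((Module.finrank ℝ E : ℝ) / 2) *
        (4 * Real.pi * (2 * t)) ^ (-(Module.finrank ℝ E : ℝ) / 2) := by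
    rw [show 4 * Real.pi * (2 * t) = 2 * (4 * Real.pi * t) by ring,
      Real.mul_rpow zero_le_two (by positivity), neg_div, Real.rpow_neg zero_le_two,
      mul_inv_cancel_left₀ (by positivity)]
  calc heatKernel t x
      ≤ (4 * Real.pi * t) ^ (-(Module.finrank ℝ E : ℝ) / 2) *
          (Real.exp (1 / 4) * Real.exp (-‖y‖ ^ 2 / (4 * (2 * t)))) := by
        rw [heatKernel, ← Real.exp_add]
        gcongr
    _ = Real.exp (1 / 4) * 2 ^ ((Module.finrank ℝ E : ℝ) / 2) * heatKernel (2 * t) y := by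
        rw [heatKernel, h_const]
        ring

variable [MeasurableSpace E] [BorelSpace E]

theorem measurable_heatKernel : Measurable (heatKernel t : E → ℝ) := by
  unfold heatKernel
  fun_prop

variable [FiniteDimensional ℝ E]

theorem lintegral_heatKernel (ht : 0 < t) : ∫⁻ x : E, ENNReal.ofReal (heatKernel t x) = 1 := by
  have h_integral : ∫ x : E, heatKernel t x = 1 := by
    have h_exponent (x : E) : -‖x‖ ^ 2 / (4 * t) = -(1 / (4 * t)) * ‖x‖ ^ 2 := by ring
    simp only [heatKernel, h_exponent]
    rw [integral_const_mul, GaussianFourier.integral_rexp_neg_mul_sq_norm (by positivity),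
      div_div_eq_mul_div, div_one, mul_left_comm, ← mul_assoc, neg_div,
      Real.rpow_neg (by positivity), inv_mul_cancel₀ (by positivity)]
  rw [← ofReal_integral_eq_lintegral_ofReal (.of_integral_ne_zero (by simp [h_integral]))
    (ae_of_all _ (heatKernel_nonneg ht)), h_integral, ofReal_one]

theorem volume_ball_mul_lintegral_heatKernel_le (ht : 0 < t) {f : E → ℝ≥0∞} (hf : AEMeasurable f)
    (x : E) :
    volume (Metric.ball (0 : E) √t) * ∫⁻ y, ENNReal.ofReal (heatKernel t (x - y)) * f y ≤
      ENNReal.ofReal (Real.exp (1 / 4) * 2 ^ ((Module.finrank ℝ E : ℝ) / 2)) *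
        ⨆ z, ∫⁻ y in Metric.ball z √t, f y := by
  set A : ℝ := Real.exp (1 / 4) * 2 ^ ((Module.finrank ℝ E : ℝ) / 2)
  have h_measurable : Measurable fun z => ENNReal.ofReal (heatKernel (2 * t) (x - z)) :=
    (measurable_heatKernel.comp (measurable_const_sub x)).ennreal_ofReal
  have h_mass : ∫⁻ z, ENNReal.ofReal A * ENNReal.ofReal (heatKernel (2 * t) (x - z)) =
      ENNReal.ofReal A := by
    rw [lintegral_const_mul _ h_measurable,
      lintegral_sub_left_eq_self (fun z => ENNReal.ofReal (heatKernel (2 * t) z)),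
      lintegral_heatKernel (by positivity), mul_one]
  rw [← h_mass]
  refine mul_lintegral_mul_le_of_forall_ball (h_measurable.const_mul _).aemeasurable hf
    (fun y => (Measure.addHaar_ball_center volume y _).ge) fun y z hz => ?_
  rw [← ofReal_mul (by positivity)]
  gcongr
  refine heatKernel_le_heatKernel_two_mul ht ?_
  rw [← dist_eq_norm, dist_sub_left, dist_comm]
  exact (Metric.mem_ball.1 hz).le

theorem volume_ball_sqrt (ht : 0 < t) :
    volume (Metric.ball (0 : E) √t) =
      ENNReal.ofReal
        (t ^ ((Module.finrank ℝ E : ℝ) / 2) * volume.real (Metric.ball (0 : E) 1)) := by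
  rw [Measure.addHaar_ball_of_pos _ _ (Real.sqrt_pos.2 ht), ofReal_mul (by positivity),
    ofReal_measureReal measure_ball_lt_top.ne, Real.sqrt_eq_rpow, ← Real.rpow_mul_natCast ht.le,
    one_div_mul_eq_div]

end HeatKernel

section Decay

variable {N : ℕ} {r : ℝ≥0∞} {φ : Euc N → ℝ} {t ρ : ℝ}

theorem heatS_le_lintegral_heatKernel (ht : 0 < t) (x : Euc N) :
    heatS N t φ x ≤
      ∫⁻ y, ENNReal.ofReal (heatKernel t (x - y)) * ENNReal.ofReal |φ y| := by
  refine lintegral_mono fun y => ?_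
  rw [← ofReal_mul (heatKernel_nonneg ht _), heatKernel, finrank_euclideanSpace_fin]
  gcongr
  exact le_abs_self _

theorem heatS_le_volume_ball_rpow_mul_ulocNorm (hr : 1 ≤ r) (hφ : AEMeasurable φ) (ht : 0 < t)
    (htρ : √t ≤ ρ) (x : Euc N) :
    heatS N t φ x ≤
      ENNReal.ofReal (Real.exp (1 / 4) * 2 ^ ((N : ℝ) / 2)) *
        (ENNReal.ofReal (weakEmbeddingConst r) *
          volume (Metric.ball (0 : Euc N) √t) ^ (-(1 / r.toReal)) * ulocNorm N r ρ φ) := by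
  set A : ℝ≥0∞ := ENNReal.ofReal (Real.exp (1 / 4) * 2 ^ ((N : ℝ) / 2))
  set C : ℝ≥0∞ := ENNReal.ofReal (weakEmbeddingConst r)
  set B : ℝ≥0∞ := volume (Metric.ball (0 : Euc N) √t)
  have hB_zero : B ≠ 0 := (Metric.measure_ball_pos _ _ (Real.sqrt_pos.2 ht)).ne'
  have hB_top : B ≠ ⊤ := measure_ball_lt_top.ne
  rw [← ENNReal.mul_le_mul_iff_right hB_zero hB_top]
  calc B * heatS N t φ x
      ≤ B * ∫⁻ y, ENNReal.ofReal (heatKernel t (x - y)) * ENNReal.ofReal |φ y| := by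
        gcongr
        exact heatS_le_lintegral_heatKernel ht x
    _ ≤ A * ⨆ z, ∫⁻ y in Metric.ball z √t, ENNReal.ofReal |φ y| := by
        simpa only [finrank_euclideanSpace_fin] using
          volume_ball_mul_lintegral_heatKernel_le ht hφ.abs.ennreal_ofReal x
    _ ≤ A * (C * B ^ (1 - 1 / r.toReal) * ulocNorm N r ρ φ) := by
        gcongr
        exact iSup_le (setLIntegral_ball_abs_le_ulocNorm hr hφ htρ)
    _ = B * (A * (C * B ^ (-(1 / r.toReal)) * ulocNorm N r ρ φ)) := by
        rw [sub_eq_add_neg, ENNReal.rpow_add _ _ hB_zero hB_top, ENNReal.rpow_one]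
        ring

/-- The constant `c*` of the smoothing estimate. -/
def heatDecayConst (N : ℕ) (r : ℝ≥0∞) : ℝ :=
  Real.exp (1 / 4) * 2 ^ ((N : ℝ) / 2) * weakEmbeddingConst r *
    volume.real (Metric.ball (0 : Euc N) 1) ^ (-(1 / r.toReal))

theorem measureReal_ball_pos {X : Type*} [PseudoMetricSpace X] [ProperSpace X] [MeasurableSpace X]
    (μ : Measure X) [μ.IsOpenPosMeasure] [IsFiniteMeasureOnCompacts μ] (x : X) {s : ℝ}
    (hs : 0 < s) : 0 < μ.real (Metric.ball x s) :=
  toReal_pos (Metric.measure_ball_pos _ _ hs).ne' measure_ball_lt_top.ne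

theorem heatDecayConst_pos (hr : 1 ≤ r) : 0 < heatDecayConst N r := by
  have := weakEmbeddingConst_pos hr
  have := measureReal_ball_pos volume (0 : Euc N) one_pos
  unfold heatDecayConst
  positivity

theorem heatS_le_heatDecayConst_mul_ulocNorm (hr : 1 ≤ r) (hφ : AEMeasurable φ) (ht : 0 < t)
    (htρ : √t ≤ ρ) (x : Euc N) :
    heatS N t φ x ≤
      ENNReal.ofReal (heatDecayConst N r * t ^ (-(N : ℝ) / (2 * r.toReal))) * ulocNorm N r ρ φ := by
  have hω := measureReal_ball_pos volume (0 : Euc N) one_pos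
  have hC := weakEmbeddingConst_pos hr
  have h_time : (t ^ ((N : ℝ) / 2)) ^ (-(1 / r.toReal)) = t ^ (-(N : ℝ) / (2 * r.toReal)) := by
    rw [← Real.rpow_mul ht.le]
    congr 1
    ring
  refine (heatS_le_volume_ball_rpow_mul_ulocNorm hr hφ ht htρ x).trans_eq ?_
  rw [volume_ball_sqrt ht, finrank_euclideanSpace_fin, ofReal_rpow_of_pos (by positivity),
    Real.mul_rpow (by positivity) hω.le, h_time, ← mul_assoc, ← ofReal_mul hC.le,
    ← ofReal_mul (by positivity), heatDecayConst]
  congr 2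
  ring

end Decay

/-- Lemma 2.1: for `N ≥ 1` and `1 ≤ r ≤ ∞` there is `c* > 0` depending only
on `N, r` such that `‖S(t)φ‖_{L^∞} ≤ c* t^{-N/(2r)} |||φ|||_{r,ρ}` for `0 < t ≤ ρ²`. -/
theorem statement0 (N : ℕ) (hN : 1 ≤ N) (r : ℝ≥0∞) (hr : 1 ≤ r) :
    ∃ c : ℝ, 0 < c ∧
      ∀ ρ : ℝ, 0 < ρ → ∀ φ : Euc N → ℝ, Measurable φ → (∀ x, 0 ≤ φ x) →
        ulocNorm N r ρ φ < ⊤ →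
        ∀ t : ℝ, 0 < t → t ≤ ρ ^ 2 →
          heatSup N t φ ≤
            ENNReal.ofReal (c * t ^ (if r = ⊤ then (0 : ℝ) else -(N : ℝ) / (2 * r.toReal))) *
              ulocNorm N r ρ φ := by
  refine ⟨heatDecayConst N r, heatDecayConst_pos hr, fun ρ hρ φ hφ _ _ t ht htρ => ?_⟩
  have h_exponent : (if r = ⊤ then (0 : ℝ) else -(N : ℝ) / (2 * r.toReal)) =
      -(N : ℝ) / (2 * r.toReal) := by
    split_ifs with hr_top <;> simp [hr_top]
  rw [h_exponent]
  exact essSup_le_of_ae_le _ <| ae_of_all _ <|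
    heatS_le_heatDecayConst_mul_ulocNorm hr hφ.aemeasurable ht (Real.sqrt_le_iff.2 ⟨hρ.le, htρ⟩)
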